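/- arXiv:1111.0317 — 3 statements merged into one kernel-verified Lean document; each statement's English description precedes it below -/
import Mathlib

section
/- Let C be a p×p symmetric positive-definite correlation matrix, Z ~ N_p(0, C), F_1, …, F_p cdfs on ℝ, and Y_j = F_j⁻(Φ(Z_j)). Fix j ≠ j′. (i) If c_{jj′} = 0 then Y_j and Y_{j′} are independent. (ii) If moreover F_j and F_{j′} are continuous (and non-degenerate), then Y_j and Y_{j′} are independent only if c_{jj′} = 0. Hence for continuous margins, Y_j ⊥ Y_{j′} if and only if c_{jj′} = 0. -/
open MeasureTheory Matrix Real Filter ProbabilityTheory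

/-- Density of the centered multivariate Gaussian with covariance `S`. -/
noncomputable def gaussPdf {ι : Type*} [Fintype ι] [DecidableEq ι]
    (S : Matrix ι ι ℝ) (x : ι → ℝ) : ℝ :=
  Real.exp (-(x ⬝ᵥ S⁻¹.mulVec x) / 2) / Real.sqrt ((2 * π) ^ Fintype.card ι * S.det)

/-- The centered multivariate Gaussian measure `N(0, S)` on `ι → ℝ`. -/
noncomputable def gaussianMeasure {ι : Type*} [Fintype ι] [DecidableEq ι]
    (S : Matrix ι ι ℝ) : Measure (ι → ℝ) :=
  volume.withDensity fun x => ENNReal.ofReal (gaussPdf S x)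

/-- A cumulative distribution function on ℝ. -/
def IsCDF (F : ℝ → ℝ) : Prop :=
  Monotone F ∧ (∀ x, ContinuousWithinAt F (Set.Ici x) x) ∧
    Tendsto F atBot (nhds 0) ∧ Tendsto F atTop (nhds 1)

/-- `F` is the cdf of a point mass at some `a`. -/
def IsDegenerateCDF (F : ℝ → ℝ) : Prop :=
  ∃ a : ℝ, ∀ t, F t = if a ≤ t then (1 : ℝ) else 0

/-- The pseudo-inverse `F⁻(u) = inf {y : F y ≥ u}` of a cdf. -/
noncomputable def pseudoInv (F : ℝ → ℝ) (u : ℝ) : ℝ := sInf {y : ℝ | u ≤ F y}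

/-- Standard normal cdf `Φ`. -/
noncomputable def Phi (x : ℝ) : ℝ :=
  (ProbabilityTheory.gaussianReal 0 1 (Set.Iic x)).toReal

lemma gaussPdf_pos {ι : Type*} [Fintype ι] [DecidableEq ι] {S : Matrix ι ι ℝ} (hS : S.PosDef)
    (x : ι → ℝ) : 0 < gaussPdf S x := by
  have := hS.det_pos
  unfold gaussPdf
  positivity

lemma continuous_gaussPdf {ι : Type*} [Fintype ι] [DecidableEq ι] (S : Matrix ι ι ℝ) :
    Continuous (gaussPdf S) := by
  unfold gaussPdf
  fun_prop

lemma gaussPdf_one {ι : Type*} [Fintype ι] [DecidableEq ι] (x : ι → ℝ) :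
    gaussPdf 1 x = ∏ i, gaussianPDFReal 0 1 (x i) := by
  have hs : √((2 * π) ^ Fintype.card ι) = √(2 * π) ^ Fintype.card ι := by
    rw [Real.sqrt_eq_iff_mul_self_eq (by positivity) (by positivity), ← mul_pow,
      Real.mul_self_sqrt (by positivity)]
  simp only [gaussPdf, gaussianPDFReal, Finset.prod_mul_distrib, ← Real.exp_sum]
  simp only [dotProduct, inv_one, one_mulVec, det_one, mul_one, hs, Finset.prod_const,
    Finset.card_univ, NNReal.coe_one, sub_zero, ← Finset.sum_div, Finset.sum_neg_distrib, pow_two]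
  rw [div_eq_inv_mul, inv_pow]

lemma gaussianMeasure_one {ι : Type*} [Fintype ι] [DecidableEq ι] :
    gaussianMeasure (1 : Matrix ι ι ℝ) = Measure.pi fun _ ↦ gaussianReal 0 1 := by
  refine (Measure.pi_eq fun s hs ↦ ?_).symm
  rw [gaussianMeasure, withDensity_apply _ (MeasurableSet.univ_pi hs),
    volume_pi, Measure.restrict_pi_pi]
  simp_rw [gaussPdf_one]
  rw [← ofReal_integral_eq_lintegral_ofReal, integral_fintype_prod_eq_prod (𝕜 := ℝ),
    ENNReal.ofReal_prod_of_nonneg]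
  · simp_rw [gaussianReal_apply_eq_integral 0 one_ne_zero]
  · exact fun i _ ↦ integral_nonneg fun x ↦ gaussianPDFReal_nonneg 0 1 x
  · exact Integrable.fintype_prod fun i ↦ (integrable_gaussianPDFReal 0 1).restrict
  · exact ae_of_all _ fun x ↦ Finset.prod_nonneg fun i _ ↦ gaussianPDFReal_nonneg 0 1 _

lemma gaussianMeasure_mul_transpose {ι : Type*} [Fintype ι] [DecidableEq ι] {A : Matrix ι ι ℝ}
    (hA : A.det ≠ 0) :
    (gaussianMeasure (1 : Matrix ι ι ℝ)).map (A *ᵥ ·) = gaussianMeasure (A * Aᵀ) := by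
  have hm : Measurable (A *ᵥ · : (ι → ℝ) → ι → ℝ) := by fun_prop
  have hpdf (x : ι → ℝ) : gaussPdf 1 x = |A.det| * gaussPdf (A * Aᵀ) (A *ᵥ x) := by
    have hu : IsUnit A.det := hA.isUnit
    have hq : (A *ᵥ x) ⬝ᵥ (A * Aᵀ)⁻¹ *ᵥ (A *ᵥ x) = x ⬝ᵥ x := by
      rw [Matrix.mul_inv_rev, mulVec_mulVec, Matrix.mul_assoc, nonsing_inv_mul _ hu,
        Matrix.mul_one, ← transpose_nonsing_inv, dotProduct_comm, mulVec_transpose,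
        ← dotProduct_mulVec, mulVec_mulVec, nonsing_inv_mul _ hu, one_mulVec]
    have h0 : |A.det| ≠ 0 := by simpa using hA
    simp only [gaussPdf, hq, det_mul, det_transpose, inv_one, one_mulVec, det_one, mul_one]
    rw [Real.sqrt_mul (by positivity), Real.sqrt_mul_self_eq_abs]
    field_simp
  have hvol : (volume : Measure (ι → ℝ)) =
      ENNReal.ofReal |A.det| • volume.map (A *ᵥ ·) := by
    have := Real.map_matrix_volume_pi_eq_smul_volume_pi hA
    change volume.map (A *ᵥ ·) = _ at this
    rw [this, smul_smul, ← ENNReal.ofReal_mul (abs_nonneg _), ← abs_mul, mul_inv_cancel₀ hA]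
    simp
  ext s hs
  have hc := (continuous_gaussPdf (A * Aᵀ)).measurable
  rw [Measure.map_apply hm hs, gaussianMeasure, gaussianMeasure,
    withDensity_apply _ (hm hs), withDensity_apply _ hs]
  nth_rewrite 2 [hvol]
  rw [Measure.restrict_smul, lintegral_smul_measure, Measure.restrict_map hm hs,
    lintegral_map (by fun_prop) hm, smul_eq_mul, ← lintegral_const_mul _ (by fun_prop)]
  simp_rw [hpdf, ENNReal.ofReal_mul (abs_nonneg _)]

open scoped MatrixOrder Matrix.Norms.L2Operator in
lemma gaussianMeasure_eq_map_multivariateGaussian {ι : Type*} [Fintype ι] [DecidableEq ι]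
    {S : Matrix ι ι ℝ} (hS : S.PosDef) :
    gaussianMeasure S = (multivariateGaussian 0 S).map WithLp.ofLp := by
  have hT : (CFC.sqrt S)ᵀ = CFC.sqrt S := by
    rw [← conjTranspose_eq_transpose_of_trivial]
    exact (CFC.sqrt_nonneg S).posSemidef.isHermitian.eq
  have hsq : CFC.sqrt S * (CFC.sqrt S)ᵀ = S := by
    rw [hT, CFC.sqrt_mul_sqrt_self _ hS.posSemidef.nonneg]
  have hdet : (CFC.sqrt S).det ≠ 0 := fun h ↦ hS.det_pos.ne' <| by
    rw [← hsq, det_mul, h, zero_mul]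
  conv_lhs => rw [← hsq]
  rw [← gaussianMeasure_mul_transpose hdet, multivariateGaussian, ← map_pi_eq_stdGaussian,
    Measure.map_map (by fun_prop) (by fun_prop), Measure.map_map (by fun_prop) (by fun_prop),
    gaussianMeasure_one]
  congr 1
  ext x i
  simp

lemma isOpenPosMeasure_gaussianMeasure {ι : Type*} [Fintype ι] [DecidableEq ι]
    {S : Matrix ι ι ℝ} (hS : S.PosDef) : (gaussianMeasure S).IsOpenPosMeasure := by
  have hac : (volume : Measure (ι → ℝ)) ≪ gaussianMeasure S :=
    withDensity_absolutelyContinuous' (continuous_gaussPdf S).measurable.ennreal_ofReal.aemeasurable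
      (ae_of_all _ fun x ↦ by simpa using gaussPdf_pos hS x)
  exact hac.isOpenPosMeasure

section Law

variable {ι : Type*} [Fintype ι] [DecidableEq ι] {S : Matrix ι ι ℝ} {α : Type*}
  [MeasurableSpace α] {P : Measure α} {Z : α → ι → ℝ}

lemma hasGaussianLaw_of_map_eq_gaussianMeasure (hS : S.PosDef) (hZ : P.map Z = gaussianMeasure S) :
    HasGaussianLaw Z P where
  isGaussian_map := by
    rw [hZ, gaussianMeasure_eq_map_multivariateGaussian hS]
    exact (IsGaussian.hasGaussianLaw_id.map_equiv
      (PiLp.continuousLinearEquiv 2 ℝ fun _ : ι ↦ ℝ)).isGaussian_map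

lemma map_eval_eq_gaussianReal (hS : S.PosDef) (hm : Measurable Z)
    (hZ : P.map Z = gaussianMeasure S) (i : ι) :
    P.map (fun ω ↦ Z ω i) = gaussianReal 0 (S i i).toNNReal := by
  have h : P.map (fun ω ↦ Z ω i) = (P.map Z).map (fun x ↦ x i) := by
    rw [Measure.map_map (by fun_prop) hm]; rfl
  rw [h, hZ, gaussianMeasure_eq_map_multivariateGaussian hS,
    Measure.map_map (by fun_prop) (by fun_prop)]
  exact (measurePreserving_eval_multivariateGaussian (μ := 0) hS.posSemidef (i := i)).map_eq

lemma covariance_eval_eq (hS : S.PosDef) (hm : Measurable Z)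
    (hZ : P.map Z = gaussianMeasure S) (i j : ι) :
    cov[fun ω ↦ Z ω i, fun ω ↦ Z ω j; P] = S i j := by
  have h := covariance_map_fun (μ := P) (Z := Z) (X := fun x ↦ x i) (Y := fun x ↦ x j)
    (measurable_pi_apply i).aestronglyMeasurable (measurable_pi_apply j).aestronglyMeasurable
    hm.aemeasurable
  rw [← h, hZ, gaussianMeasure_eq_map_multivariateGaussian hS,
    covariance_map_fun (measurable_pi_apply i).aestronglyMeasurable
      (measurable_pi_apply j).aestronglyMeasurable (by fun_prop)]
  exact covariance_eval_multivariateGaussian (μ := 0) hS.posSemidef i j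

end Law

lemma gaussianReal_real_Ici_zero (v : NNReal) :
    (gaussianReal 0 v).real (Set.Ici 0) = (gaussianReal 0 v).real (Set.Iic 0) := by
  conv_lhs => rw [← neg_zero, ← gaussianReal_map_neg]
  rw [map_measureReal_apply measurable_neg measurableSet_Ici]
  simp

lemma one_half_le_gaussianReal_real_Iic_zero (v : NNReal) :
    1 / 2 ≤ (gaussianReal 0 v).real (Set.Iic 0) := by
  have h1 := probReal_add_probReal_compl (μ := gaussianReal 0 v) (s := Set.Iic 0) measurableSet_Iic
  have h2 : (gaussianReal 0 v).real (Set.Iic 0)ᶜ ≤ (gaussianReal 0 v).real (Set.Ici 0) :=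
    measureReal_mono fun x hx ↦ by simpa using (Set.notMem_Iic.1 hx).le
  rw [gaussianReal_real_Ici_zero] at h2
  linarith

lemma gaussianReal_real_Iic_zero {v : NNReal} (hv : v ≠ 0) :
    (gaussianReal 0 v).real (Set.Iic 0) = 1 / 2 := by
  have := nullSingletonClass_gaussianReal (μ := 0) hv
  have h1 := probReal_add_probReal_compl (μ := gaussianReal 0 v) (s := Set.Iic 0) measurableSet_Iic
  rw [Set.compl_Iic, measureReal_congr Ioi_ae_eq_Ici, gaussianReal_real_Ici_zero] at h1
  linarith

/-- Positively correlated centered Gaussian variables with equal variance are jointly nonpositive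
with probability larger than `1 / 4`. -/
lemma one_quarter_lt_of_covariance_pos {α : Type*} [MeasurableSpace α] {P : Measure α}
    [IsProbabilityMeasure P] {X W : α → ℝ} (hXm : Measurable X) (hWm : Measurable W)
    (hXW : HasGaussianLaw (fun ω ↦ (X ω, W ω)) P)
    (hX : P.map X = gaussianReal 0 1) (hW : P[W] = 0)
    (hc : 0 < cov[X, W; P])
    (hpos : 0 < P {ω | X ω < 0 ∧ W ω < 0 ∧ 0 < W ω - cov[X, W; P] * X ω}) :
    1 / 4 < P.real {ω | X ω ≤ 0 ∧ W ω ≤ 0} := by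
  set c := cov[X, W; P] with hcdef
  have hXL : HasGaussianLaw X P := hXW.fst
  have hWL : HasGaussianLaw W P := hXW.snd
  have hX0 : P[X] = 0 := by
    rw [← integral_map (f := fun x : ℝ ↦ x) hXm.aemeasurable (by fun_prop), hX]
    exact integral_id_gaussianReal
  have hXvar : Var[X; P] = 1 := by
    have := variance_map (μ := P) (X := fun x : ℝ ↦ x) (Y := X) (by fun_prop) hXm.aemeasurable
    rw [hX, variance_fun_id_gaussianReal] at this
    exact this.symm
  set V : α → ℝ := fun ω ↦ W ω - c * X ω with hV
  have hVm : Measurable V := by fun_prop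
  have hXV : HasGaussianLaw (fun ω ↦ (X ω, V ω)) P := hXW.map_fun
    ((ContinuousLinearMap.fst ℝ ℝ ℝ).prod
      (ContinuousLinearMap.snd ℝ ℝ ℝ - c • ContinuousLinearMap.fst ℝ ℝ ℝ))
  have hVL : HasGaussianLaw V P := hXV.snd
  have hVmap : ∃ v, P.map V = gaussianReal 0 v := by
    refine ⟨Var[V; P].toNNReal, ?_⟩
    rw [hVL.map_eq_gaussianReal]
    congr 1
    simp only [hV]
    rw [integral_sub hWL.integrable (hXL.integrable.const_mul c), integral_const_mul, hX0, hW]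
    simp
  obtain ⟨v, hv⟩ := hVmap
  have hcov : cov[X, V; P] = 0 := by
    have : cov[X, V; P] = cov[X, W - c • X; P] := rfl
    rw [this, covariance_sub_right hXL.memLp_two hWL.memLp_two (hXL.memLp_two.const_smul c),
      covariance_smul_right, covariance_self hXm.aemeasurable, hXvar, ← hcdef]
    ring
  have hind := hXV.indepFun_of_covariance_eq_zero hcov
  have hprod : P.real {ω | X ω ≤ 0 ∧ V ω ≤ 0} =
      P.real (X ⁻¹' Set.Iic 0) * P.real (V ⁻¹' Set.Iic 0) := by
    rw [measureReal_def, measureReal_def, measureReal_def, ← ENNReal.toReal_mul,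
      ← hind.measure_inter_preimage_eq_mul _ _ measurableSet_Iic measurableSet_Iic]
    rfl
  have h1 : P.real (X ⁻¹' Set.Iic 0) = 1 / 2 := by
    rw [← map_measureReal_apply hXm measurableSet_Iic, hX, gaussianReal_real_Iic_zero one_ne_zero]
  have h2 : 1 / 2 ≤ P.real (V ⁻¹' Set.Iic 0) := by
    rw [← map_measureReal_apply hVm measurableSet_Iic, hv]
    exact one_half_le_gaussianReal_real_Iic_zero v
  have hdisj : Disjoint {ω | X ω ≤ 0 ∧ V ω ≤ 0} {ω | X ω < 0 ∧ W ω < 0 ∧ 0 < V ω} :=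
    Set.disjoint_left.2 fun ω h h' ↦ h'.2.2.not_ge h.2
  have hmeas : MeasurableSet {ω | X ω < 0 ∧ W ω < 0 ∧ 0 < V ω} := by measurability
  have hsub : {ω | X ω ≤ 0 ∧ V ω ≤ 0} ∪ {ω | X ω < 0 ∧ W ω < 0 ∧ 0 < V ω} ⊆
      {ω | X ω ≤ 0 ∧ W ω ≤ 0} := by
    rintro ω (⟨h, h'⟩ | ⟨h, h', -⟩)
    · refine ⟨h, ?_⟩
      simp only [hV] at h'
      nlinarith
    · exact ⟨h.le, h'.le⟩
  have hle := measureReal_mono (μ := P) hsub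
  rw [measureReal_union hdisj hmeas, hprod, h1] at hle
  have hpos' : 0 < P.real {ω | X ω < 0 ∧ W ω < 0 ∧ 0 < V ω} :=
    ENNReal.toReal_pos hpos.ne' (measure_ne_top _ _)
  linarith

lemma strictMono_Phi : StrictMono Phi := by
  intro a b hab
  have hne : gaussianReal 0 1 (Set.Ioc a b) ≠ 0 := fun h ↦ by
    have := gaussianReal_absolutelyContinuous' 0 one_ne_zero h
    exact hab.not_ge (by simpa using this)
  have hpos : 0 < (gaussianReal 0 1).real (Set.Ioc a b) :=
    ENNReal.toReal_pos hne (measure_ne_top _ _)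
  have h := measureReal_union (μ := gaussianReal 0 1)
    (Set.Iic_disjoint_Ioc (le_refl a) (c := b)) measurableSet_Ioc
  rw [Set.Iic_union_Ioc_eq_Iic hab.le] at h
  change (gaussianReal 0 1).real (Set.Iic a) < (gaussianReal 0 1).real (Set.Iic b)
  linarith

lemma Phi_zero : Phi 0 = 1 / 2 := gaussianReal_real_Iic_zero one_ne_zero

lemma Phi_mem_Ioo (x : ℝ) : Phi x ∈ Set.Ioo 0 1 :=
  ⟨ENNReal.toReal_nonneg.trans_lt (strictMono_Phi (sub_one_lt x)),
    (strictMono_Phi (lt_add_one x)).trans_le measureReal_le_one⟩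

section PseudoInverse

variable {F : ℝ → ℝ} {u : ℝ}

lemma IsCDF.bddBelow_setOf_le (hF : IsCDF F) (hu : 0 < u) : BddBelow {y | u ≤ F y} := by
  obtain ⟨b, hb⟩ := (hF.2.2.1.eventually_lt_const hu).exists
  exact ⟨b, fun y hy ↦ le_of_not_gt fun h ↦ (hy.trans (hF.1 h.le)).not_gt hb⟩

lemma IsCDF.nonempty_setOf_le (hF : IsCDF F) (hu : u < 1) : {y | u ≤ F y}.Nonempty :=
  ((hF.2.2.2.eventually_const_lt hu).mono fun _ h ↦ h.le).exists

lemma IsCDF.pseudoInv_le_iff (hF : IsCDF F) (hu : u ∈ Set.Ioo 0 1) {t : ℝ} :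
    pseudoInv F u ≤ t ↔ u ≤ F t := by
  refine ⟨fun h ↦ ?_, fun h ↦ csInf_le (hF.bddBelow_setOf_le hu.1) h⟩
  by_contra! hlt
  have hev : ∀ᶠ s in nhdsWithin t (Set.Ioi t), F s < u :=
    ((hF.2.1 t).eventually_lt_const hlt).filter_mono (nhdsWithin_mono _ Set.Ioi_subset_Ici_self)
  obtain ⟨s, hs, hts⟩ := (hev.and self_mem_nhdsWithin).exists
  have : s ≤ pseudoInv F u := le_csInf (hF.nonempty_setOf_le hu.2) fun y hy ↦
    le_of_not_gt fun hys ↦ (hy.trans (hF.1 hys.le)).not_gt hs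
  exact (this.trans h).not_gt hts

lemma IsCDF.monotone_pseudoInv_Phi (hF : IsCDF F) : Monotone fun x ↦ pseudoInv F (Phi x) :=
  fun _ b hab ↦ csInf_le_csInf (hF.bddBelow_setOf_le (Phi_mem_Ioo _).1)
    (hF.nonempty_setOf_le (Phi_mem_Ioo b).2) fun _ hy ↦ (strictMono_Phi.monotone hab).trans hy

lemma IsCDF.exists_pseudoInv_Phi_le_iff (hF : IsCDF F) (hc : Continuous F) :
    ∃ t, ∀ x, pseudoInv F (Phi x) ≤ t ↔ x ≤ 0 := by
  obtain ⟨t, ht⟩ : (1 / 2 : ℝ) ∈ Set.range F := by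
    refine mem_range_of_exists_le_of_exists_ge hc ?_ ?_
    · exact ((hF.2.2.1.eventually_lt_const one_half_pos).mono fun _ h ↦ h.le).exists
    · exact hF.nonempty_setOf_le one_half_lt_one
  exact ⟨t, fun x ↦ by
    rw [hF.pseudoInv_le_iff (Phi_mem_Ioo x), ht, ← Phi_zero, strictMono_Phi.le_iff_le]⟩

end PseudoInverse

/-- in a Gaussian copula model `Y_j = F_j⁻(Φ(Z_j))` with `Z ~ N_p(0, C)` and
`j ≠ j'`: (i) if `c_{jj'} = 0` then `Y_j` and `Y_{j'}` are independent; (ii) if moreover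
`F_j` and `F_{j'}` are continuous and non-degenerate, then independence of `Y_j` and
`Y_{j'}` forces `c_{jj'} = 0`. -/
theorem gaussian_copula_pairwise_independence (p : ℕ) (hp : 1 ≤ p)
    (C : Matrix (Fin p) (Fin p) ℝ) (hC : C.PosDef) (hCcorr : ∀ j, C j j = 1)
    {α : Type*} [MeasurableSpace α] (P : Measure α) [IsProbabilityMeasure P]
    (Z : α → Fin p → ℝ) (hZmeas : Measurable Z) (hZlaw : P.map Z = gaussianMeasure C)
    (F : Fin p → ℝ → ℝ) (hF : ∀ j, IsCDF (F j))
    (j j' : Fin p) (hjj' : j ≠ j') :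
    (C j j' = 0 →
      IndepFun (fun ω => pseudoInv (F j) (Phi (Z ω j)))
        (fun ω => pseudoInv (F j') (Phi (Z ω j'))) P) ∧
    (Continuous (F j) → Continuous (F j') →
      ¬ IsDegenerateCDF (F j) → ¬ IsDegenerateCDF (F j') →
      IndepFun (fun ω => pseudoInv (F j) (Phi (Z ω j)))
        (fun ω => pseudoInv (F j') (Phi (Z ω j'))) P →
      C j j' = 0) := by
  have hL := hasGaussianLaw_of_map_eq_gaussianMeasure hC hZlaw
  have hcov := covariance_eval_eq hC hZmeas hZlaw j j'
  have hmap (i : Fin p) : P.map (fun ω ↦ Z ω i) = gaussianReal 0 1 := by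
    simp [map_eval_eq_gaussianReal hC hZmeas hZlaw, hCcorr]
  have hpair : HasGaussianLaw (fun ω ↦ (Z ω j, Z ω j')) P := hL.prodMk j j'
  have hm (i : Fin p) : Measurable fun ω ↦ Z ω i := by fun_prop
  refine ⟨fun h ↦ ?_, fun hcj hcj' _ _ hind ↦ ?_⟩
  · exact (hpair.indepFun_of_covariance_eq_zero (hcov.trans h)).comp
      (hF j).monotone_pseudoInv_Phi.measurable (hF j').monotone_pseudoInv_Phi.measurable
  have hmean (i : Fin p) : ∫ ω, Z ω i ∂P = 0 := by
    rw [← integral_map (f := fun x : ℝ ↦ x) (hm i).aemeasurable (by fun_prop), hmap i]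
    exact integral_id_gaussianReal
  have hhalf (i : Fin p) : P.real {ω | Z ω i ≤ 0} = 1 / 2 := by
    rw [← gaussianReal_real_Iic_zero one_ne_zero, ← hmap i,
      map_measureReal_apply (hm i) measurableSet_Iic]
    rfl
  obtain ⟨t, ht⟩ := (hF j).exists_pseudoInv_Phi_le_iff hcj
  obtain ⟨t', ht'⟩ := (hF j').exists_pseudoInv_Phi_le_iff hcj'
  have hquarter : P.real {ω | Z ω j ≤ 0 ∧ Z ω j' ≤ 0} = 1 / 4 := by
    have := hind.measure_inter_preimage_eq_mul (Set.Iic t) (Set.Iic t')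
      measurableSet_Iic measurableSet_Iic
    simp only [Set.preimage, Set.mem_Iic, ht, ht'] at this
    rw [measureReal_def, Set.ofPred_and, this, ENNReal.toReal_mul, ← measureReal_def,
      ← measureReal_def, hhalf, hhalf]
    norm_num
  have hopen {U : Set (Fin p → ℝ)} (hU : IsOpen U) (hne : U.Nonempty) : 0 < P (Z ⁻¹' U) := by
    have := isOpenPosMeasure_gaussianMeasure hC
    rw [← Measure.map_apply hZmeas hU.measurableSet, hZlaw]
    exact hU.measure_pos _ hne
  rcases lt_trichotomy (C j j') 0 with hneg | h0 | hpos
  · exfalso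
    have hcovn : cov[fun ω ↦ Z ω j, fun ω ↦ -Z ω j'; P] = -C j j' := by
      rw [covariance_fun_neg_right, hcov]
    have hpair' : HasGaussianLaw (fun ω ↦ (Z ω j, -Z ω j')) P := hpair.map_fun
      ((ContinuousLinearMap.fst ℝ ℝ ℝ).prod (-ContinuousLinearMap.snd ℝ ℝ ℝ))
    have hlt := one_quarter_lt_of_covariance_pos (W := fun ω ↦ -Z ω j') (hm j)
      (hm j').neg hpair' (hmap j) (by rw [integral_neg, hmean, neg_zero]) (by rw [hcovn]; linarith) (by
        rw [hcovn]
        refine hopen (U := {z | z j < 0 ∧ -z j' < 0 ∧ 0 < -z j' - -C j j' * z j}) ?_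
          ⟨fun i ↦ if i = j then -1 else -C j j' / 2, ?_⟩
        · refine IsOpen.and ?_ (IsOpen.and ?_ ?_) <;> exact isOpen_lt (by fun_prop) (by fun_prop)
        · simp only [Set.mem_ofPred_eq, if_true, hjj'.symm, if_false]
          refine ⟨?_, ?_, ?_⟩ <;> linarith)
    have hnull : P.real {ω | Z ω j' = 0} = 0 := by
      have := nullSingletonClass_gaussianReal (μ := 0) (v := 1) one_ne_zero
      have h := map_measureReal_apply (μ := P) (hm j') (measurableSet_singleton (0 : ℝ))
      rw [hmap j', measureReal_def, measure_singleton] at h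
      exact h.symm
    have hcover : {ω | Z ω j ≤ 0 ∧ -Z ω j' ≤ 0} ⊆
        ({ω | Z ω j ≤ 0} \ {ω | Z ω j ≤ 0 ∧ Z ω j' ≤ 0}) ∪ {ω | Z ω j' = 0} := by
      rintro ω ⟨h1, h2⟩
      by_cases h : Z ω j' = 0
      · exact Or.inr h
      · exact Or.inl ⟨h1, fun h' ↦ h (le_antisymm h'.2 (neg_nonpos.1 h2))⟩
    have hle := (measureReal_mono (μ := P) hcover).trans (measureReal_union_le _ _)
    rw [measureReal_sdiff (fun ω h ↦ h.1) (by measurability), hnull, hhalf, hquarter] at hle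
    linarith
  · exact h0
  · exfalso
    have hlt := one_quarter_lt_of_covariance_pos (hm j) (hm j') hpair (hmap j) (hmean j')
      (by rwa [hcov]) (by
        rw [hcov]
        refine hopen (U := {z | z j < 0 ∧ z j' < 0 ∧ 0 < z j' - C j j' * z j}) ?_
          ⟨fun i ↦ if i = j then -1 else -C j j' / 2, ?_⟩
        · refine IsOpen.and ?_ (IsOpen.and ?_ ?_) <;> exact isOpen_lt (by fun_prop) (by fun_prop)
        · simp only [Set.mem_ofPred_eq, if_true, hjj'.symm, if_false]
          refine ⟨?_, ?_, ?_⟩ <;> linarith)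
    exact hlt.ne' hquarter
end

section
/- Let (Z_1, Z_2) be bivariate Gaussian with mean zero, unit variances and correlation ρ. Let f, g : ℝ → ℝ be Borel measurable functions such that f(Z_1) and g(Z_2) have finite, strictly positive variances. Then |Corr(f(Z_1), g(Z_2))| ≤ |ρ|. In particular, in a bivariate Gaussian copula model Y_1 = F_1⁻(Φ(Z_1)), Y_2 = F_2⁻(Φ(Z_2)) with copula correlation parameter c = ρ and margins of finite positive variance, the copula parameter c is an upper bound in absolute value on the Pearson correlation Corr(Y_1, Y_2). -/
open MeasureTheory ProbabilityTheory Real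

open scoped ENNReal NNReal

theorem MeasureTheory.MemLp.integral_mul_sq_le {α : Type*} [MeasurableSpace α] {μ : Measure α}
    {u v : α → ℝ} (hu : MemLp u 2 μ) (hv : MemLp v 2 μ) :
    (∫ x, u x * v x ∂μ) ^ 2 ≤ (∫ x, u x ^ 2 ∂μ) * ∫ x, v x ^ 2 ∂μ := by
  have h := discrim_le_zero (a := ∫ x, v x ^ 2 ∂μ) (b := 2 * ∫ x, u x * v x ∂μ)
    (c := ∫ x, u x ^ 2 ∂μ) fun t => by
      have huv : Integrable (fun x => u x * v x) μ := hu.integrable_mul hv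
      have h1 : ∫ x, (u x + t * v x) ^ 2 ∂μ = (∫ x, v x ^ 2 ∂μ) * (t * t)
          + 2 * (∫ x, u x * v x ∂μ) * t + ∫ x, u x ^ 2 ∂μ := by
        have h2 : ∀ x, (u x + t * v x) ^ 2 = (t * t) * v x ^ 2 + 2 * t * (u x * v x) + u x ^ 2 :=
          fun x => by ring
        have i1 : Integrable (fun x => (t * t) * v x ^ 2) μ := hv.integrable_sq.const_mul _
        have i2 : Integrable (fun x => 2 * t * (u x * v x)) μ := huv.const_mul _
        have i12 : Integrable (fun x => (t * t) * v x ^ 2 + 2 * t * (u x * v x)) μ := i1.add i2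
        simp_rw [h2]
        rw [integral_add i12 hu.integrable_sq, integral_add i1 i2, integral_const_mul,
          integral_const_mul]
        ring
      rw [← h1]
      exact integral_nonneg fun x => sq_nonneg _
  rw [discrim] at h
  nlinarith

theorem MeasureTheory.MemLp.abs_integral_mul_le {α : Type*} [MeasurableSpace α] {μ : Measure α}
    {u v : α → ℝ} (hu : MemLp u 2 μ) (hv : MemLp v 2 μ) :
    |∫ x, u x * v x ∂μ| ≤ √(∫ x, u x ^ 2 ∂μ) * √(∫ x, v x ^ 2 ∂μ) := by
  rw [← Real.sqrt_mul (integral_nonneg fun x => sq_nonneg _)]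
  exact Real.abs_le_sqrt (hu.integral_mul_sq_le hv)

theorem MeasureTheory.MeasurePreserving.integral_comp_of_aestronglyMeasurable {α β : Type*}
    [MeasurableSpace α] [MeasurableSpace β] {μ : Measure α} {ν : Measure β} {φ : α → β}
    (hφ : MeasurePreserving φ μ ν) {u : β → ℝ} (hu : AEStronglyMeasurable u ν) :
    ∫ x, u (φ x) ∂μ = ∫ y, u y ∂ν := by
  have h := integral_map hφ.aemeasurable (f := u) (by rwa [hφ.map_eq])
  rw [hφ.map_eq] at h
  exact h.symm

/-- A log-convex sequence dominated by a geometric one decays at that rate from the start. -/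
theorem le_mul_of_logConvex_of_le_geometric {a : ℕ → ℝ} {C r : ℝ} (ha : ∀ n, 0 ≤ a n)
    (hr : 0 ≤ r) (hconv : ∀ n, a (n + 1) ^ 2 ≤ a n * a (n + 2)) (hle : ∀ n, a n ≤ C * r ^ n) :
    a 1 ≤ r * a 0 := by
  by_contra! hlt
  have h1 : 0 < a 1 := (mul_nonneg hr (ha 0)).trans_lt hlt
  have h0 : 0 < a 0 := by
    refine (ha 0).lt_of_ne fun h => ?_
    have := hconv 0
    rw [← h] at this
    nlinarith
  have hr0 : 0 < r := by
    refine hr.lt_of_ne fun h => ?_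
    have := hle 1
    rw [← h] at this
    simp at this
    linarith
  set q := a 1 / a 0 with hq
  have hq0 : 0 < q := div_pos h1 h0
  have hrq : r < q := (lt_div_iff₀ h0).2 hlt
  have hstep : ∀ n, 0 < a n ∧ q * a n ≤ a (n + 1) := by
    intro n
    induction n with
    | zero => exact ⟨h0, by rw [hq, div_mul_cancel₀ _ h0.ne']⟩
    | succ n ih =>
      obtain ⟨hn, hn1⟩ := ih
      have hp : 0 < a (n + 1) := (mul_pos hq0 hn).trans_le hn1
      refine ⟨hp, ?_⟩
      have := hconv n
      refine le_of_mul_le_mul_left ?_ hn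
      nlinarith
  have hpow : ∀ n, a 0 * q ^ n ≤ a n := by
    intro n
    induction n with
    | zero => simp
    | succ n ih =>
      calc a 0 * q ^ (n + 1) = q * (a 0 * q ^ n) := by ring
        _ ≤ q * a n := by gcongr
        _ ≤ a (n + 1) := (hstep n).2
  obtain ⟨n, hn⟩ := pow_unbounded_of_one_lt (C / a 0) ((one_lt_div hr0).2 hrq)
  rw [div_pow, div_lt_div_iff₀ h0 (pow_pos hr0 n)] at hn
  have := hpow n
  have := hle n
  linarith

namespace ProbabilityTheory

/-- If `(x, w)` are independent standard Gaussians, then the pair `(x, ρ x + √(1 - ρ²) w)` is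
exchangeable. -/
theorem map_gaussianReal_prod_correlated_swap {ρ : ℝ} (hρ : |ρ| ≤ 1) :
    ((gaussianReal 0 1).prod (gaussianReal 0 1)).map
        (fun p : ℝ × ℝ => (ρ * p.1 + √(1 - ρ ^ 2) * p.2, p.1)) =
      ((gaussianReal 0 1).prod (gaussianReal 0 1)).map
        (fun p : ℝ × ℝ => (p.1, ρ * p.1 + √(1 - ρ ^ 2) * p.2)) := by
  set γ := gaussianReal 0 1
  obtain ⟨hl, hu⟩ := abs_le.1 hρ
  have hrot := IsGaussian.map_rotation_eq_self (μ := γ) (by simp [γ, integral_id_gaussianReal])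
    (Real.arccos ρ)
  have hneg : (γ.prod γ).map (Prod.map id (fun x : ℝ => -x)) = γ.prod γ := by
    rw [← Measure.map_prod_map _ _ measurable_id measurable_neg, Measure.map_id,
      gaussianReal_map_neg, neg_zero]
  have hc : √(1 - ρ ^ 2) ^ 2 = 1 - ρ ^ 2 := Real.sq_sqrt (by nlinarith)
  conv_rhs => rw [← hneg, ← hrot]
  rw [Measure.map_map (by fun_prop) (by fun_prop), Measure.map_map (by fun_prop) (by fun_prop)]
  congr 1
  ext p
  · simp [ContinuousLinearMap.rotation_apply, Real.cos_arccos hl hu, Real.sin_arccos]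
  · simp [ContinuousLinearMap.rotation_apply, Real.cos_arccos hl hu, Real.sin_arccos]
    linear_combination -p.1 * hc

theorem measurePreserving_gaussianReal_prod_correlated {ρ : ℝ} (hρ : |ρ| ≤ 1) :
    MeasurePreserving (fun p : ℝ × ℝ => ρ * p.1 + √(1 - ρ ^ 2) * p.2)
      ((gaussianReal 0 1).prod (gaussianReal 0 1)) (gaussianReal 0 1) := by
  refine ⟨by fun_prop, ?_⟩
  have h := congrArg (Measure.map Prod.fst) (map_gaussianReal_prod_correlated_swap hρ)
  rw [Measure.map_map (by fun_prop) (by fun_prop), Measure.map_map (by fun_prop) (by fun_prop)] at h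
  exact h.trans (measurePreserving_fst (μ := gaussianReal 0 1) (ν := gaussianReal 0 1)).map_eq

/-- The Ornstein–Uhlenbeck (Mehler) operator with correlation `ρ`. -/
noncomputable def mehler (ρ : ℝ) (h : ℝ → ℝ) (x : ℝ) : ℝ :=
  ∫ w, h (ρ * x + √(1 - ρ ^ 2) * w) ∂gaussianReal 0 1

variable {ρ M : ℝ} {K : ℝ≥0} {h f g : ℝ → ℝ}

theorem abs_mehler_le (hM : ∀ x, |h x| ≤ M) (x : ℝ) : |mehler ρ h x| ≤ M := by
  have := norm_integral_le_of_norm_le_const (μ := gaussianReal 0 1)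
    (f := fun w => h (ρ * x + √(1 - ρ ^ 2) * w)) (ae_of_all _ fun w => hM _)
  simpa [mehler] using this

theorem integrable_mehler_kernel (hc : Continuous h) (hM : ∀ x, |h x| ≤ M) (x : ℝ) :
    Integrable (fun w => h (ρ * x + √(1 - ρ ^ 2) * w)) (gaussianReal 0 1) :=
  .of_bound (by fun_prop) M (ae_of_all _ fun w => hM _)

theorem lipschitzWith_mehler (hK : LipschitzWith K h) (hM : ∀ x, |h x| ≤ M) :
    LipschitzWith (‖ρ‖₊ * K) (mehler ρ h) := by
  refine LipschitzWith.of_dist_le_mul fun x y => ?_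
  rw [Real.dist_eq, mehler, mehler, ← integral_sub (integrable_mehler_kernel hK.continuous hM x)
    (integrable_mehler_kernel hK.continuous hM y)]
  have := norm_integral_le_of_norm_le_const (μ := gaussianReal 0 1)
    (f := fun w => h (ρ * x + √(1 - ρ ^ 2) * w) - h (ρ * y + √(1 - ρ ^ 2) * w))
    (C := (‖ρ‖₊ * K : ℝ≥0) * dist x y) (ae_of_all _ fun w => by
      rw [Real.norm_eq_abs, ← Real.dist_eq]
      refine (hK.dist_le_mul _ _).trans (le_of_eq ?_)
      rw [Real.dist_eq, Real.dist_eq, add_sub_add_right_eq_sub, ← mul_sub, abs_mul]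
      push_cast
      rw [Real.norm_eq_abs]
      ring)
  simpa using this

theorem integral_mul_mehler (hf : MemLp f 2 (gaussianReal 0 1)) (hρ : |ρ| ≤ 1)
    (hg : MemLp g 2 (gaussianReal 0 1)) :
    ∫ x, f x * mehler ρ g x ∂gaussianReal 0 1 =
      ∫ p : ℝ × ℝ, f p.1 * g (ρ * p.1 + √(1 - ρ ^ 2) * p.2)
        ∂(gaussianReal 0 1).prod (gaussianReal 0 1) := by
  rw [integral_prod]
  · simp_rw [integral_const_mul, mehler]
  · exact (hf.comp_measurePreserving measurePreserving_fst).integrable_mul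
      (hg.comp_measurePreserving (measurePreserving_gaussianReal_prod_correlated hρ))

theorem integral_mehler_mul (hf : MemLp f 2 (gaussianReal 0 1)) (hρ : |ρ| ≤ 1)
    (hg : MemLp g 2 (gaussianReal 0 1)) (hfm : Measurable f) (hgm : Measurable g) :
    ∫ x, mehler ρ f x * g x ∂gaussianReal 0 1 = ∫ x, f x * mehler ρ g x ∂gaussianReal 0 1 := by
  simp_rw [mul_comm (mehler ρ f _)]
  rw [integral_mul_mehler hg hρ hf, integral_mul_mehler hf hρ hg]
  have key := congrArg (fun μ => ∫ p : ℝ × ℝ, f p.1 * g p.2 ∂μ)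
    (map_gaussianReal_prod_correlated_swap hρ)
  have hm : Measurable fun p : ℝ × ℝ => f p.1 * g p.2 := by fun_prop
  rw [integral_map (by fun_prop) hm.aestronglyMeasurable,
    integral_map (by fun_prop) hm.aestronglyMeasurable] at key
  simpa [mul_comm] using key

theorem memLp_of_continuous_of_bounded {μ : Measure ℝ} [IsFiniteMeasure μ] {p : ℝ≥0∞}
    (hc : Continuous h) (hM : ∀ x, |h x| ≤ M) : MemLp h p μ :=
  .of_bound hc.aestronglyMeasurable M (ae_of_all _ hM)

theorem integral_sq_le_of_lipschitzWith (hK : LipschitzWith K h) (hM : ∀ x, |h x| ≤ M)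
    (h0 : ∫ x, h x ∂gaussianReal 0 1 = 0) :
    ∫ x, h x ^ 2 ∂gaussianReal 0 1 ≤ (K : ℝ) ^ 2 := by
  have hL : MemLp h 2 (gaussianReal 0 1) := memLp_of_continuous_of_bounded hK.continuous hM
  have hi : Integrable h (gaussianReal 0 1) := hL.integrable one_le_two
  have hid : MemLp (fun x : ℝ => x) 2 (gaussianReal 0 1) :=
    memLp_id_gaussianReal' 2 (by simp)
  have h2 : ∫ x, x ^ 2 ∂gaussianReal 0 1 = 1 := by
    have := variance_of_integral_eq_zero (X := fun x : ℝ => x) (μ := gaussianReal 0 1)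
      (by fun_prop) integral_id_gaussianReal
    rw [← this, variance_fun_id_gaussianReal, NNReal.coe_one]
  calc ∫ x, h x ^ 2 ∂gaussianReal 0 1
      ≤ ∫ x, ((K : ℝ) ^ 2 * x ^ 2 + 2 * h 0 * h x) ∂gaussianReal 0 1 := by
        refine integral_mono hL.integrable_sq
          ((hid.integrable_sq.const_mul _).add (hi.const_mul _)) fun x => ?_
        have hx := hK.dist_le_mul x 0
        rw [Real.dist_eq, Real.dist_eq, sub_zero] at hx
        have := pow_le_pow_left₀ (abs_nonneg _) hx 2
        rw [mul_pow, sq_abs, sq_abs] at this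
        simp only
        nlinarith [sq_nonneg (h 0)]
    _ = (K : ℝ) ^ 2 := by
        rw [integral_add (hid.integrable_sq.const_mul _) (hi.const_mul _), integral_const_mul,
          integral_const_mul, h0, h2]
        ring

theorem integral_mehler (hρ : |ρ| ≤ 1) (hg : MemLp g 2 (gaussianReal 0 1)) :
    ∫ x, mehler ρ g x ∂gaussianReal 0 1 = ∫ x, g x ∂gaussianReal 0 1 := by
  have := integral_mul_mehler (memLp_const (1 : ℝ)) hρ hg
  simp only [one_mul] at this
  have mp := measurePreserving_gaussianReal_prod_correlated hρ
  rw [this]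
  exact mp.integral_comp_of_aestronglyMeasurable hg.aestronglyMeasurable

/-- The Poincaré-type contraction of the Mehler operator on centred functions. -/
theorem integral_mehler_sq_le (hρ : |ρ| ≤ 1) (hK : LipschitzWith K h) (hM : ∀ x, |h x| ≤ M)
    (h0 : ∫ x, h x ∂gaussianReal 0 1 = 0) :
    ∫ x, mehler ρ h x ^ 2 ∂gaussianReal 0 1 ≤ ρ ^ 2 * ∫ x, h x ^ 2 ∂gaussianReal 0 1 := by
  have hit : ∀ n, LipschitzWith (‖ρ‖₊ ^ n * K) ((mehler ρ)^[n] h) ∧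
      (∀ x, |(mehler ρ)^[n] h x| ≤ M) ∧ ∫ x, (mehler ρ)^[n] h x ∂gaussianReal 0 1 = 0 := by
    intro n
    induction n with
    | zero => simpa using ⟨hK, hM, h0⟩
    | succ n ih =>
      obtain ⟨h1, h2, h3⟩ := ih
      rw [Function.iterate_succ_apply']
      refine ⟨?_, abs_mehler_le h2, ?_⟩
      · rw [pow_succ', mul_assoc]
        exact lipschitzWith_mehler h1 h2
      · rw [integral_mehler hρ (memLp_of_continuous_of_bounded h1.continuous h2), h3]
  have hL : ∀ n, MemLp ((mehler ρ)^[n] h) 2 (gaussianReal 0 1) := fun n =>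
    memLp_of_continuous_of_bounded (hit n).1.continuous (hit n).2.1
  refine le_mul_of_logConvex_of_le_geometric (C := (K : ℝ) ^ 2)
    (a := fun n => ∫ x, (mehler ρ)^[n] h x ^ 2 ∂gaussianReal 0 1)
    (fun n => integral_nonneg fun x => sq_nonneg _) (sq_nonneg ρ) (fun n => ?_) fun n => ?_
  · have := (hL n).integral_mul_sq_le (hL (n + 2))
    rw [Function.iterate_succ_apply' _ (n + 1), ← integral_mehler_mul (hL n) hρ (hL (n + 1))
      (hit n).1.continuous.measurable (hit (n + 1)).1.continuous.measurable,
      ← Function.iterate_succ_apply' (mehler ρ) n] at this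
    rw [Function.iterate_succ_apply' _ (n + 1)]
    simpa [sq] using this
  · refine (integral_sq_le_of_lipschitzWith (hit n).1 (hit n).2.1 (hit n).2.2).trans (le_of_eq ?_)
    push_cast
    rw [mul_pow, ← pow_mul, mul_comm n 2, pow_mul, Real.norm_eq_abs, sq_abs, mul_comm]

theorem abs_integral_correlated_le_of_lipschitzWith (hρ : |ρ| ≤ 1)
    (hf : MemLp f 2 (gaussianReal 0 1)) (hK : LipschitzWith K h) (hM : ∀ x, |h x| ≤ M)
    (h0 : ∫ x, h x ∂gaussianReal 0 1 = 0) :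
    |∫ p : ℝ × ℝ, f p.1 * h (ρ * p.1 + √(1 - ρ ^ 2) * p.2)
        ∂(gaussianReal 0 1).prod (gaussianReal 0 1)| ≤
      √(∫ x, f x ^ 2 ∂gaussianReal 0 1) * (|ρ| * √(∫ x, h x ^ 2 ∂gaussianReal 0 1)) := by
  rw [← integral_mul_mehler hf hρ (memLp_of_continuous_of_bounded hK.continuous hM)]
  refine (hf.abs_integral_mul_le (memLp_of_continuous_of_bounded
    (lipschitzWith_mehler hK hM).continuous (abs_mehler_le hM))).trans ?_
  gcongr
  rw [← Real.sqrt_sq_eq_abs, ← Real.sqrt_mul (sq_nonneg ρ)]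
  exact Real.sqrt_le_sqrt (integral_mehler_sq_le hρ hK hM h0)

/-- Centred square-integrable functions are approximated by centred bounded Lipschitz ones. -/
theorem exists_lipschitzWith_centered_approx {μ : Measure ℝ} [IsProbabilityMeasure μ]
    (hg : MemLp g 2 μ) (hg0 : ∫ x, g x ∂μ = 0) {ε : ℝ} (hε : 0 < ε) :
    ∃ (h : ℝ → ℝ) (K : ℝ≥0) (M : ℝ), LipschitzWith K h ∧ (∀ x, |h x| ≤ M) ∧
      ∫ x, h x ∂μ = 0 ∧ √(∫ x, (g x - h x) ^ 2 ∂μ) ≤ ε := by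
  obtain ⟨φ, hφs, hφ, hle⟩ := hg.exist_eLpNorm_sub_le (by simp) one_le_two hε
  obtain ⟨K, hK⟩ := hφ.lipschitzWith_of_hasCompactSupport hφs (by simp)
  obtain ⟨M, hM⟩ := hφs.exists_bound_of_continuous hφ.continuous
  have hφL : MemLp φ 2 μ := memLp_of_continuous_of_bounded hφ.continuous hM
  have hφi : Integrable φ μ := hφL.integrable one_le_two
  have hgi : Integrable g μ := hg.integrable one_le_two
  set m := ∫ x, φ x ∂μ with hm
  refine ⟨fun x => φ x - m, K, M + |m|, ?_, fun x => ?_, ?_, ?_⟩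
  · refine LipschitzWith.of_dist_le_mul fun x y => ?_
    simpa using hK.dist_le_mul x y
  · exact (abs_sub _ _).trans (by gcongr; exact hM x)
  · rw [integral_sub hφi (integrable_const m)]
    simp [hm]
  · have hd : MemLp (g - φ) 2 μ := hg.sub hφL
    have hmean : ∫ x, (g - φ) x ∂μ = -m := by
      simp only [Pi.sub_apply]
      rw [integral_sub hgi hφi, hg0, zero_sub]
    have hvar : ∫ x, (g x - (φ x - m)) ^ 2 ∂μ = Var[g - φ; μ] := by
      rw [variance_eq_integral hd.aemeasurable, hmean]
      congr with x
      simp only [Pi.sub_apply]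
      ring
    have hnorm : ∫ x, (g - φ) x ^ 2 ∂μ ≤ ε ^ 2 := by
      have := hd.eLpNorm_eq_integral_rpow_norm (by simp) (by simp)
      rw [this, ENNReal.ofReal_le_ofReal_iff hε.le] at hle
      simp only [ENNReal.toReal_ofNat, Real.rpow_two, Real.norm_eq_abs, sq_abs] at hle
      rw [← one_div, ← Real.sqrt_eq_rpow] at hle
      exact (Real.sqrt_le_left hε.le).1 hle
    rw [hvar, Real.sqrt_le_left hε.le]
    exact (variance_le_expectation_sq hd.aestronglyMeasurable).trans hnorm

theorem abs_integral_correlated_le (hρ : |ρ| ≤ 1)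
    (hf : MemLp f 2 (gaussianReal 0 1)) (hg : MemLp g 2 (gaussianReal 0 1))
    (hg0 : ∫ x, g x ∂gaussianReal 0 1 = 0) :
    |∫ p : ℝ × ℝ, f p.1 * g (ρ * p.1 + √(1 - ρ ^ 2) * p.2)
        ∂(gaussianReal 0 1).prod (gaussianReal 0 1)| ≤
      |ρ| * (√(∫ x, f x ^ 2 ∂gaussianReal 0 1) * √(∫ x, g x ^ 2 ∂gaussianReal 0 1)) := by
  set γ := gaussianReal 0 1 with hγ
  have mp := measurePreserving_gaussianReal_prod_correlated hρ
  have mp1 : MeasurePreserving Prod.fst (γ.prod γ) γ := measurePreserving_fst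
  have hfπ := hf.comp_measurePreserving mp1
  have hsq1 : ∀ {u : ℝ → ℝ}, MemLp u 2 γ → ∫ p : ℝ × ℝ, u p.1 ^ 2 ∂γ.prod γ = ∫ x, u x ^ 2 ∂γ := by
    intro u hu
    exact mp1.integral_comp_of_aestronglyMeasurable (hu.aestronglyMeasurable.pow 2)
  have hsq2 : ∀ {u : ℝ → ℝ}, MemLp u 2 γ →
      ∫ p : ℝ × ℝ, u (ρ * p.1 + √(1 - ρ ^ 2) * p.2) ^ 2 ∂γ.prod γ = ∫ x, u x ^ 2 ∂γ := by
    intro u hu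
    exact mp.integral_comp_of_aestronglyMeasurable (hu.aestronglyMeasurable.pow 2)
  set F := √(∫ x, f x ^ 2 ∂γ)
  set G := √(∫ x, g x ^ 2 ∂γ) with hG
  have hF0 : 0 ≤ F := Real.sqrt_nonneg _
  have hG0 : 0 ≤ G := Real.sqrt_nonneg _
  have key : ∀ ε > 0, |∫ p : ℝ × ℝ, f p.1 * g (ρ * p.1 + √(1 - ρ ^ 2) * p.2) ∂γ.prod γ| ≤
      |ρ| * (F * G) + ε * (F + F * |ρ|) := by
    intro ε hε
    obtain ⟨h, K, M, hK, hM, h0, hle⟩ := exists_lipschitzWith_centered_approx hg hg0 hε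
    have hh : MemLp h 2 γ := memLp_of_continuous_of_bounded hK.continuous hM
    have hd : MemLp (fun x => g x - h x) 2 γ := hg.sub hh
    have hhπ := hh.comp_measurePreserving mp
    have hdπ := hd.comp_measurePreserving mp
    have e1 : √(∫ x, h x ^ 2 ∂γ) ≤ G + ε := by
      rw [Real.sqrt_le_left (by positivity)]
      have hgd : Integrable (fun x => g x * (g x - h x)) γ := hg.integrable_mul hd
      have : ∫ x, h x ^ 2 ∂γ = ∫ x, g x ^ 2 ∂γ - 2 * ∫ x, g x * (g x - h x) ∂γ
          + ∫ x, (g x - h x) ^ 2 ∂γ := by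
        have hsub : Integrable (fun x => g x ^ 2 - 2 * (g x * (g x - h x))) γ :=
          hg.integrable_sq.sub (hgd.const_mul 2)
        rw [← integral_const_mul, ← integral_sub hg.integrable_sq (hgd.const_mul 2),
          ← integral_add hsub hd.integrable_sq]
        congr with x
        ring
      have c1 := (abs_le.1 (hg.abs_integral_mul_le hd)).1
      have c2 : G ^ 2 = ∫ x, g x ^ 2 ∂γ := Real.sq_sqrt (integral_nonneg fun x => sq_nonneg _)
      have c3 := (Real.sqrt_le_left hε.le).1 hle
      rw [← hG] at c1
      nlinarith [mul_le_mul_of_nonneg_left hle hG0]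
    have e2 := abs_integral_correlated_le_of_lipschitzWith hρ hf hK hM h0
    have e3 := hfπ.abs_integral_mul_le hdπ
    simp only [Function.comp_apply] at e3
    rw [hsq1 hf, hsq2 hd] at e3
    have e4 : ∫ p : ℝ × ℝ, f p.1 * g (ρ * p.1 + √(1 - ρ ^ 2) * p.2) ∂γ.prod γ =
        ∫ p : ℝ × ℝ, f p.1 * h (ρ * p.1 + √(1 - ρ ^ 2) * p.2) ∂γ.prod γ +
        ∫ p : ℝ × ℝ, f p.1 * (g (ρ * p.1 + √(1 - ρ ^ 2) * p.2) -
          h (ρ * p.1 + √(1 - ρ ^ 2) * p.2)) ∂γ.prod γ := by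
      refine Eq.trans ?_ (integral_add (hfπ.integrable_mul hhπ) (hfπ.integrable_mul hdπ))
      congr with p
      ring
    rw [e4]
    calc _ ≤ F * (|ρ| * √(∫ x, h x ^ 2 ∂γ)) + F * √(∫ x, (g x - h x) ^ 2 ∂γ) :=
          (abs_add_le _ _).trans (add_le_add e2 e3)
      _ ≤ F * (|ρ| * (G + ε)) + F * ε := by gcongr
      _ = _ := by ring
  refine le_of_forall_pos_le_add fun δ hδ => ?_
  have hpos : 0 < F + F * |ρ| + 1 := by positivity
  refine (key (δ / (F + F * |ρ| + 1)) (by positivity)).trans ?_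
  gcongr
  rw [div_mul_eq_mul_div, div_le_iff₀ hpos]
  nlinarith

end ProbabilityTheory

/-- Gebelein's maximal correlation bound: if `(Z₁, Z₂)` is bivariate
standard Gaussian with correlation `ρ` (realized as `Z₁ = Z`, `Z₂ = ρZ + √(1−ρ²)W`
with `Z, W` independent standard normals) and `f, g` are Borel functions such that
`f(Z₁)` and `g(Z₂)` are square-integrable with strictly positive variances, then
`|Corr(f(Z₁), g(Z₂))| ≤ |ρ|`.  In particular, in a bivariate Gaussian copula model
the copula correlation parameter bounds the Pearson correlation in absolute value. -/
theorem gebelein_maximal_correlation_bound {Ω : Type*} [MeasurableSpace Ω]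
    (P : Measure Ω) [IsProbabilityMeasure P]
    (Z W : Ω → ℝ) (hZ : Measurable Z) (hW : Measurable W)
    (hZW : IndepFun Z W P)
    (hZlaw : P.map Z = gaussianReal 0 1) (hWlaw : P.map W = gaussianReal 0 1)
    (ρ : ℝ) (hρ : |ρ| ≤ 1) (f g : ℝ → ℝ) (hf : Measurable f) (hg : Measurable g)
    (hfL2 : Integrable (fun ω => (f (Z ω)) ^ 2) P)
    (hgL2 : Integrable (fun ω => (g (ρ * Z ω + Real.sqrt (1 - ρ ^ 2) * W ω)) ^ 2) P)
    (hfvar : 0 < variance (fun ω => f (Z ω)) P)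
    (hgvar : 0 < variance (fun ω => g (ρ * Z ω + Real.sqrt (1 - ρ ^ 2) * W ω)) P) :
    |∫ ω, (f (Z ω) - ∫ ω', f (Z ω') ∂P) *
          (g (ρ * Z ω + Real.sqrt (1 - ρ ^ 2) * W ω) -
            ∫ ω', g (ρ * Z ω' + Real.sqrt (1 - ρ ^ 2) * W ω') ∂P) ∂P| /
        Real.sqrt (variance (fun ω => f (Z ω)) P *
          variance (fun ω => g (ρ * Z ω + Real.sqrt (1 - ρ ^ 2) * W ω)) P)
      ≤ |ρ| := by
  set γ := gaussianReal 0 1 with hγ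
  have hmap : P.map (fun ω => (Z ω, W ω)) = γ.prod γ := by
    rw [hZW.map_prod_eq_prod_map_map hZ.aemeasurable hW.aemeasurable, hZlaw, hWlaw]
  have mpZ : MeasurePreserving Z P γ := ⟨hZ, hZlaw⟩
  have mpZW : MeasurePreserving (fun ω => (Z ω, W ω)) P (γ.prod γ) := ⟨by fun_prop, hmap⟩
  have mpY : MeasurePreserving (fun ω => ρ * Z ω + √(1 - ρ ^ 2) * W ω) P γ :=
    (measurePreserving_gaussianReal_prod_correlated hρ).comp mpZW
  have hfL : MemLp f 2 γ := hZlaw ▸ (memLp_map_measure_iff hf.aestronglyMeasurable hZ.aemeasurable).2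
    ((memLp_two_iff_integrable_sq (hf.comp hZ).aestronglyMeasurable).2 hfL2)
  have hgL : MemLp g 2 γ := mpY.map_eq ▸
    (memLp_map_measure_iff hg.aestronglyMeasurable mpY.aemeasurable).2
      ((memLp_two_iff_integrable_sq (hg.comp mpY.measurable).aestronglyMeasurable).2 hgL2)
  have hfm : ∫ ω, f (Z ω) ∂P = ∫ x, f x ∂γ :=
    mpZ.integral_comp_of_aestronglyMeasurable hf.aestronglyMeasurable
  have hgm : ∫ ω, g (ρ * Z ω + √(1 - ρ ^ 2) * W ω) ∂P = ∫ x, g x ∂γ :=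
    mpY.integral_comp_of_aestronglyMeasurable hg.aestronglyMeasurable
  have hfv : variance (fun ω => f (Z ω)) P = ∫ x, (f x - ∫ y, f y ∂γ) ^ 2 ∂γ := by
    rw [← variance_eq_integral hf.aemeasurable]
    exact mpZ.variance_fun_comp hf.aemeasurable
  have hgv : variance (fun ω => g (ρ * Z ω + √(1 - ρ ^ 2) * W ω)) P =
      ∫ x, (g x - ∫ y, g y ∂γ) ^ 2 ∂γ := by
    rw [← variance_eq_integral hg.aemeasurable]
    exact mpY.variance_fun_comp hg.aemeasurable
  rw [div_le_iff₀ (Real.sqrt_pos.2 (mul_pos hfvar hgvar)), Real.sqrt_mul hfvar.le, hfm, hgm, hfv,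
    hgv]
  set m := ∫ x, f x ∂γ
  set m' := ∫ x, g x ∂γ with hm'
  have hcentered : ∫ x, (g x - m') ∂γ = 0 := by
    rw [integral_sub (hgL.integrable one_le_two) (integrable_const m')]
    simp [hm']
  have key := abs_integral_correlated_le hρ (hfL.sub (memLp_const m)) (hgL.sub (memLp_const m'))
    hcentered
  rw [← hγ, ← hmap, integral_map (by fun_prop) (Measurable.aestronglyMeasurable (by fun_prop))]
    at key
  exact key
end

section
/- Let C be a 3×3 symmetric positive-definite correlation matrix with (C^{−1})_{12} = 0, c_{13} ≠ 0 and c_{23} ≠ 0, and let (Z_1, Z_2, Z_3) ~ N_3(0, C). Let B = (a, b] with −∞ ≤ a < b ≤ +∞ (so P(Z_3 ∈ B) > 0). Then for all s, t ∈ ℝ, the sign of P(Z_1 ≤ s, Z_2 ≤ t | Z_3 ∈ B) − P(Z_1 ≤ s | Z_3 ∈ B)·P(Z_2 ≤ t | Z_3 ∈ B) equals the sign of c_{13} c_{23}; in particular it is nonzero, so Z_1 and Z_2 (and hence any variables obtained from them by strictly increasing transformations) are conditionally dependent given the event {Z_3 ∈ B}. Thus a zero entry of C^{−1} does not imply conditional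 independence once a coordinate is discretized. -/
open MeasureTheory Matrix Real

open ProbabilityTheory

/-- Strict form of Chebyshev's integral inequality for a pair of functions whose increments
have a product of constant strict sign. -/
theorem chebyshev_integral_pos (ν : Measure ℝ) [IsFiniteMeasure ν] [NeZero ν]
    (hν : ν ≪ volume) {f g : ℝ → ℝ} {σ : ℝ}
    (hfi : Integrable f ν) (hgi : Integrable g ν) (hfg : Integrable (fun z => f z * g z) ν)
    (hσ : ∀ z w, z ≠ w → 0 < σ * ((f z - f w) * (g z - g w))) :
    0 < σ * (ν.real Set.univ * ∫ z, f z * g z ∂ν - (∫ z, f z ∂ν) * ∫ z, g z ∂ν) := by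
  have h1 : Integrable (fun p : ℝ × ℝ => f p.1 * g p.1) (ν.prod ν) := hfg.comp_fst ν
  have h2 : Integrable (fun p : ℝ × ℝ => f p.2 * g p.2) (ν.prod ν) := hfg.comp_snd ν
  have h3 : Integrable (fun p : ℝ × ℝ => f p.1 * g p.2) (ν.prod ν) := hfi.mul_prod hgi
  have h4 : Integrable (fun p : ℝ × ℝ => g p.1 * f p.2) (ν.prod ν) := hgi.mul_prod hfi
  have hexp : (fun p : ℝ × ℝ => σ * ((f p.1 - f p.2) * (g p.1 - g p.2))) =
      fun p => σ * (f p.1 * g p.1 + f p.2 * g p.2 - f p.1 * g p.2 - g p.1 * f p.2) := by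
    funext p; ring
  have hint : Integrable (fun p : ℝ × ℝ => σ * ((f p.1 - f p.2) * (g p.1 - g p.2)))
      (ν.prod ν) := by
    rw [hexp]; exact (((h1.add h2).sub h3).sub h4).const_mul σ
  have hval : ∫ p, σ * ((f p.1 - f p.2) * (g p.1 - g p.2)) ∂(ν.prod ν) =
      2 * (σ * (ν.real Set.univ * ∫ z, f z * g z ∂ν - (∫ z, f z ∂ν) * ∫ z, g z ∂ν)) := by
    have h12 : Integrable (fun p : ℝ × ℝ => f p.1 * g p.1 + f p.2 * g p.2) (ν.prod ν) :=
      h1.add h2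
    have h123 : Integrable (fun p : ℝ × ℝ => f p.1 * g p.1 + f p.2 * g p.2 - f p.1 * g p.2)
      (ν.prod ν) := h12.sub h3
    rw [hexp, integral_const_mul, integral_sub h123 h4, integral_sub h12 h3, integral_add h1 h2,
      integral_prod_mul, integral_prod_mul, integral_fun_fst (fun z => f z * g z), integral_fun_snd (fun z => f z * g z)]
    simp only [smul_eq_mul]
    ring
  have hnonneg : 0 ≤ fun p : ℝ × ℝ => σ * ((f p.1 - f p.2) * (g p.1 - g p.2)) := by
    intro p
    by_cases h : p.1 = p.2
    · simp [h]
    · exact (hσ _ _ h).le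
  have hdiag : (ν.prod ν) {p : ℝ × ℝ | p.1 = p.2} = 0 := by
    rw [Measure.measure_prod_null (measurableSet_eq_fun measurable_fst measurable_snd)]
    refine Filter.Eventually.of_forall fun z => hν ?_
    have : Prod.mk z ⁻¹' {p : ℝ × ℝ | p.1 = p.2} = {z} := by ext w; simp [eq_comm]
    rw [this]; simp
  have hpos := (integral_pos_iff_support_of_nonneg hnonneg hint).2 ?_
  · rw [hval] at hpos; linarith
  · have hae : Function.support (fun p : ℝ × ℝ => σ * ((f p.1 - f p.2) * (g p.1 - g p.2)))
        =ᵐ[ν.prod ν] Set.univ := by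
      rw [Filter.eventuallyEq_univ, mem_ae_iff]
      refine measure_mono_null (fun p hp => ?_) hdiag
      by_contra h
      exact hp (hσ _ _ h).ne'
    rw [measure_congr hae, ← Set.univ_prod_univ, Measure.prod_prod, pos_iff_ne_zero]
    simp [NeZero.ne ν]

theorem gaussianReal_Iic_eq (m : ℝ) (v : NNReal) (s : ℝ) :
    gaussianReal m v (Set.Iic s) = gaussianReal 0 v (Set.Iic (s - m)) := by
  have h := gaussianReal_map_add_const (μ := 0) (v := v) m
  rw [zero_add] at h
  rw [← h, Measure.map_apply (measurable_add_const m) measurableSet_Iic]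
  congr 1
  ext x
  simp [le_sub_iff_add_le]

theorem strictMono_gaussianReal_real_Iic {v : NNReal} (hv : v ≠ 0) :
    StrictMono fun s => (gaussianReal 0 v).real (Set.Iic s) := by
  intro s t hst
  have hU : Set.Iic t = Set.Iic s ∪ Set.Ioc s t := (Set.Iic_union_Ioc_eq_Iic hst.le).symm
  have hpos : 0 < (gaussianReal 0 v).real (Set.Ioc s t) := by
    rw [Measure.real, ENNReal.toReal_pos_iff]
    refine ⟨pos_iff_ne_zero.2 fun h => ?_, measure_lt_top _ _⟩
    have := gaussianReal_absolutelyContinuous' 0 hv h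
    simp only [Real.volume_Ioc, ENNReal.ofReal_eq_zero] at this
    linarith
  have hd : Disjoint (Set.Iic s) (Set.Ioc s t) := Set.Iic_disjoint_Ioc le_rfl
  simp only
  rw [hU, measureReal_union hd measurableSet_Ioc]
  linarith

theorem measurable_gaussianReal_const_mul_Iic (c s : ℝ) (v : NNReal) :
    Measurable fun z : ℝ => gaussianReal (c * z) v (Set.Iic s) := by
  simp only [gaussianReal_Iic_eq (c * _)]
  have hm : Monotone fun u => gaussianReal 0 v (Set.Iic u) :=
    fun u w h => measure_mono (Set.Iic_subset_Iic.2 h)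
  exact hm.measurable.comp (by fun_prop)

theorem gaussianReal_real_Iic_sub_mul_pos {c : ℝ} (hc : c ≠ 0) {v : NNReal} (hv : v ≠ 0)
    (s : ℝ) {z w : ℝ} (hzw : z ≠ w) :
    0 < c * (w - z) *
      ((gaussianReal (c * z) v).real (Set.Iic s) - (gaussianReal (c * w) v).real (Set.Iic s)) := by
  have hmono := strictMono_gaussianReal_real_Iic hv
  simp only [Measure.real, gaussianReal_Iic_eq (c * _)] at hmono ⊢
  have hne : c * (w - z) ≠ 0 := mul_ne_zero hc (sub_ne_zero.2 hzw.symm)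
  rcases hne.lt_or_gt with h | h
  · have := @hmono (s - c * z) (s - c * w) (by linarith)
    exact mul_pos_of_neg_of_neg h (by simp only at this; linarith)
  · have := @hmono (s - c * w) (s - c * z) (by linarith)
    exact mul_pos h (by simp only at this; linarith)

/-- If two coordinates of a trivariate centered Gaussian have zero partial correlation given the
third, which has unit variance, the density splits into the two conditional Gaussian densities
and a function of the third coordinate. -/
theorem exists_gaussPdf_eq_mul (C : Matrix (Fin 3) (Fin 3) ℝ) (hC : C.PosDef)
    (h22 : C 2 2 = 1) (hpartial : C⁻¹ 0 1 = 0) :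
    ∃ v₀ v₁ : NNReal, v₀ ≠ 0 ∧ v₁ ≠ 0 ∧ ∃ q : ℝ → ℝ, Measurable q ∧ (∀ z, 0 < q z) ∧
      ∀ x, gaussPdf C x = gaussianPDFReal (C 0 2 * x 2) v₀ (x 0) *
        gaussianPDFReal (C 1 2 * x 2) v₁ (x 1) * q (x 2) := by
  have hK := hC.inv
  have hK0 : 0 < C⁻¹ 0 0 := hK.diag_pos
  have hK1 : 0 < C⁻¹ 1 1 := hK.diag_pos
  have hdet : 0 < C.det := hC.det_pos
  have hsymm : ∀ i j, C⁻¹ i j = C⁻¹ j i := fun i j => by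
    simpa using (hK.isHermitian.apply i j).symm
  have hmul : C⁻¹ * C = 1 := Matrix.nonsing_inv_mul _ hdet.ne'.isUnit
  have h02 : C⁻¹ 0 2 = -(C⁻¹ 0 0 * C 0 2) := by
    have h := congrFun (congrFun hmul 0) 2
    simp [Matrix.mul_apply, Fin.sum_univ_three, hpartial, h22] at h
    linarith
  have h12 : C⁻¹ 1 2 = -(C⁻¹ 1 1 * C 1 2) := by
    have h := congrFun (congrFun hmul 1) 2
    simp [Matrix.mul_apply, Fin.sum_univ_three, hsymm 1 0, hpartial, h22] at h
    linarith
  have hv₀ : 0 < (C⁻¹ 0 0)⁻¹ := inv_pos.2 hK0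
  have hv₁ : 0 < (C⁻¹ 1 1)⁻¹ := inv_pos.2 hK1
  refine ⟨(C⁻¹ 0 0)⁻¹.toNNReal, (C⁻¹ 1 1)⁻¹.toNNReal, (Real.toNNReal_pos.2 hv₀).ne',
    (Real.toNNReal_pos.2 hv₁).ne',
    fun z => √(2 * π * (C⁻¹ 0 0)⁻¹) * √(2 * π * (C⁻¹ 1 1)⁻¹) *
      Real.exp (-(C⁻¹ 2 2 - C⁻¹ 0 0 * C 0 2 ^ 2 - C⁻¹ 1 1 * C 1 2 ^ 2) * z ^ 2 / 2) /
        √((2 * π) ^ Fintype.card (Fin 3) * C.det), by fun_prop, fun z => by positivity, fun x => ?_⟩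
  have hs₀ : √(2 * π * (C⁻¹ 0 0)⁻¹) ≠ 0 := by positivity
  have hs₁ : √(2 * π * (C⁻¹ 1 1)⁻¹) ≠ 0 := by positivity
  have hquad : -(x ⬝ᵥ C⁻¹.mulVec x) / 2 =
      -(x 0 - C 0 2 * x 2) ^ 2 / (2 * (C⁻¹ 0 0)⁻¹) + -(x 1 - C 1 2 * x 2) ^ 2 / (2 * (C⁻¹ 1 1)⁻¹) +
        -(C⁻¹ 2 2 - C⁻¹ 0 0 * C 0 2 ^ 2 - C⁻¹ 1 1 * C 1 2 ^ 2) * x 2 ^ 2 / 2 := by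
    simp only [Matrix.mulVec, dotProduct, Fin.sum_univ_three, hsymm 1 0, hsymm 2 0, hsymm 2 1,
      hpartial, h02, h12]
    field_simp
    ring
  rw [gaussPdf, hquad, Real.exp_add, Real.exp_add]
  simp only [gaussianPDFReal, Real.coe_toNNReal _ hv₀.le, Real.coe_toNNReal _ hv₁.le]
  field_simp

theorem measurable_gaussPdf {ι : Type*} [Fintype ι] [DecidableEq ι] (S : Matrix ι ι ℝ) :
    Measurable (gaussPdf S) := by
  unfold gaussPdf
  simp only [dotProduct, Matrix.mulVec]
  fun_prop

theorem lintegral_fin_three {f : (Fin 3 → ℝ) → ENNReal} (hf : Measurable f) :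
    ∫⁻ x, f x = ∫⁻ z, ∫⁻ x, ∫⁻ y, f ![x, y, z] := by
  have he := volume_preserving_piFinSuccAbove (fun _ : Fin 3 => ℝ) 2
  have he' := (volume_preserving_finTwoArrow ℝ).symm
  have h : ∀ z x y, (MeasurableEquiv.piFinSuccAbove (fun _ : Fin 3 => ℝ) 2).symm
      (z, MeasurableEquiv.finTwoArrow.symm (x, y)) = ![x, y, z] := by
    intro z x y
    ext i
    fin_cases i <;> rfl
  rw [← he.symm.lintegral_comp hf, Measure.volume_eq_prod,
    lintegral_prod _ (by fun_prop)]
  refine lintegral_congr fun z => ?_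
  rw [← he'.lintegral_comp (by fun_prop), Measure.volume_eq_prod,
    lintegral_prod _ (by fun_prop)]
  simp only [h]

/-- Disintegration of the law of `(Z₁, Z₂, Z₃)` along `Z₃` when the partial correlation of
`Z₁` and `Z₂` given `Z₃` vanishes: conditionally on `Z₃ = z` the first two coordinates are
independent Gaussians with means `c₁₃ z` and `c₂₃ z`. -/
theorem exists_gaussianMeasure_apply_eq_lintegral (C : Matrix (Fin 3) (Fin 3) ℝ) (hC : C.PosDef)
    (h22 : C 2 2 = 1) (hpartial : C⁻¹ 0 1 = 0) :
    ∃ v₀ v₁ : NNReal, v₀ ≠ 0 ∧ v₁ ≠ 0 ∧ ∃ ν : Measure ℝ, ν ≪ volume ∧ volume ≪ ν ∧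
      ∀ S T U : Set ℝ, MeasurableSet S → MeasurableSet T → MeasurableSet U →
        gaussianMeasure C {x | x 0 ∈ S ∧ x 1 ∈ T ∧ x 2 ∈ U} =
          ∫⁻ z in U, gaussianReal (C 0 2 * z) v₀ S * gaussianReal (C 1 2 * z) v₁ T ∂ν := by
  obtain ⟨v₀, v₁, hv₀, hv₁, q, hq, hqpos, hpdf⟩ := exists_gaussPdf_eq_mul C hC h22 hpartial
  have hqm : Measurable fun z => ENNReal.ofReal (q z) := hq.ennreal_ofReal
  refine ⟨v₀, v₁, hv₀, hv₁, volume.withDensity fun z => ENNReal.ofReal (q z),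
    withDensity_absolutelyContinuous _ _,
    withDensity_absolutelyContinuous' hqm.aemeasurable (by simp [hqpos]),
    fun S T U hS hT hU => ?_⟩
  have hE : MeasurableSet {x : Fin 3 → ℝ | x 0 ∈ S ∧ x 1 ∈ T ∧ x 2 ∈ U} :=
    (measurable_pi_apply 0 hS).inter ((measurable_pi_apply 1 hT).inter (measurable_pi_apply 2 hU))
  rw [gaussianMeasure, withDensity_apply _ hE, ← lintegral_indicator hE,
    lintegral_fin_three ((measurable_gaussPdf C).ennreal_ofReal.indicator hE),
    restrict_withDensity hU, lintegral_withDensity_eq_lintegral_mul_non_measurable _ hqm (by simp),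
    ← lintegral_indicator hU]
  refine lintegral_congr fun z => ?_
  have hsplit : ∀ x y, {x : Fin 3 → ℝ | x 0 ∈ S ∧ x 1 ∈ T ∧ x 2 ∈ U}.indicator
      (fun x => ENNReal.ofReal (gaussPdf C x)) ![x, y, z] =
      U.indicator (fun z => ENNReal.ofReal (q z)) z *
        S.indicator (gaussianPDF (C 0 2 * z) v₀) x *
        T.indicator (gaussianPDF (C 1 2 * z) v₁) y := by
    intro x y
    have hval : ENNReal.ofReal (gaussPdf C ![x, y, z]) = ENNReal.ofReal (q z) *
        gaussianPDF (C 0 2 * z) v₀ x * gaussianPDF (C 1 2 * z) v₁ y := by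
      rw [hpdf, gaussianPDF, gaussianPDF, ← ENNReal.ofReal_mul (hqpos z).le,
        ← ENNReal.ofReal_mul (mul_nonneg (hqpos z).le (gaussianPDFReal_nonneg _ _ _))]
      congr 1
      simp
      ring
    by_cases hx : x ∈ S <;> by_cases hy : y ∈ T <;> by_cases hz : z ∈ U <;>
      simp [Set.indicator, hx, hy, hz, hval]
  have hmS := (measurable_gaussianPDF (C 0 2 * z) v₀).indicator hS
  have hmT := (measurable_gaussianPDF (C 1 2 * z) v₁).indicator hT
  simp_rw [hsplit, lintegral_const_mul _ hmT]
  rw [lintegral_mul_const _ (hmS.const_mul _), lintegral_const_mul _ hmS,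
    lintegral_indicator hS, lintegral_indicator hT, ← gaussianReal_apply _ hv₀,
    ← gaussianReal_apply _ hv₁]
  by_cases hz : z ∈ U <;> simp [hz, mul_assoc]

theorem EReal.volume_coe_preimage_Ioc_ne_zero {a b : EReal} (hab : a < b) :
    volume ((fun z : ℝ => (z : EReal)) ⁻¹' Set.Ioc a b) ≠ 0 := by
  obtain ⟨x, hax, hxb⟩ := EReal.lt_iff_exists_real_btwn.1 hab
  obtain ⟨y, hxy, hyb⟩ := EReal.lt_iff_exists_real_btwn.1 hxb
  intro h
  have h0 : volume (Set.Ioc x y) = 0 := by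
    refine measure_mono_null (fun z hz => ?_) h
    exact ⟨hax.trans (EReal.coe_lt_coe_iff.2 hz.1), (EReal.coe_le_coe_iff.2 hz.2).trans hyb.le⟩
  rw [Real.volume_Ioc, ENNReal.ofReal_eq_zero] at h0
  have := EReal.coe_lt_coe_iff.1 hxy
  linarith

/-- Unnormalized form of the conditional covariance of `{Z₁ ≤ s}` and `{Z₂ ≤ t}` given `{Z₃ ∈ U}`:
it has the sign of `c₁₃ c₂₃` for every measurable `U` of positive Lebesgue measure. -/
theorem gaussian_discretized_covariance_pos
    (C : Matrix (Fin 3) (Fin 3) ℝ) (hC : C.PosDef) (h22 : C 2 2 = 1)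
    (hpartial : C⁻¹ 0 1 = 0) (h13 : C 0 2 ≠ 0) (h23 : C 1 2 ≠ 0)
    [IsProbabilityMeasure (gaussianMeasure C)] {U : Set ℝ} (hU : MeasurableSet U)
    (hU0 : volume U ≠ 0) (s t : ℝ) :
    let μ := gaussianMeasure C
    0 < μ.real {x | x 2 ∈ U} ∧
    0 < C 0 2 * C 1 2 * (μ.real {x | x 2 ∈ U} * μ.real {x | x 0 ≤ s ∧ x 1 ≤ t ∧ x 2 ∈ U} -
      μ.real {x | x 0 ≤ s ∧ x 2 ∈ U} * μ.real {x | x 1 ≤ t ∧ x 2 ∈ U}) := by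
  intro μ
  obtain ⟨v₀, v₁, hv₀, hv₁, ν, hν, hν', happ⟩ :=
    exists_gaussianMeasure_apply_eq_lintegral C hC h22 hpartial
  have hνU : μ {x | x 2 ∈ U} = ν U := by
    simpa using happ Set.univ Set.univ U .univ .univ hU
  have hfin : IsFiniteMeasure (ν.restrict U) :=
    ⟨by rw [Measure.restrict_apply_univ, ← hνU]; exact measure_lt_top _ _⟩
  have hne : NeZero (ν.restrict U) :=
    ⟨fun h => hU0 (hν' (Measure.restrict_eq_zero.1 h))⟩
  set f : ℝ → ℝ := fun z => (gaussianReal (C 0 2 * z) v₀).real (Set.Iic s)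
  set g : ℝ → ℝ := fun z => (gaussianReal (C 1 2 * z) v₁).real (Set.Iic t)
  have hmf := measurable_gaussianReal_const_mul_Iic (C 0 2) s v₀
  have hmg := measurable_gaussianReal_const_mul_Iic (C 1 2) t v₁
  have hfm : Measurable f := hmf.ennreal_toReal
  have hgm : Measurable g := hmg.ennreal_toReal
  have hf1 : ∀ z, ‖f z‖ ≤ 1 := fun z => by
    rw [Real.norm_of_nonneg measureReal_nonneg]; exact measureReal_le_one
  have hg1 : ∀ z, ‖g z‖ ≤ 1 := fun z => by
    rw [Real.norm_of_nonneg measureReal_nonneg]; exact measureReal_le_one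
  have hfi : Integrable f (ν.restrict U) := .of_bound hfm.aestronglyMeasurable 1 (.of_forall hf1)
  have hgi : Integrable g (ν.restrict U) := .of_bound hgm.aestronglyMeasurable 1 (.of_forall hg1)
  have hfgi : Integrable (fun z => f z * g z) (ν.restrict U) :=
    hgi.bdd_mul hfm.aestronglyMeasurable (.of_forall hf1)
  have h2 : μ.real {x | x 2 ∈ U} = (ν.restrict U).real Set.univ := by
    rw [Measure.real, Measure.real, hνU, Measure.restrict_apply_univ]
  have h0 : μ.real {x | x 0 ≤ s ∧ x 2 ∈ U} = ∫ z in U, f z ∂ν := by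
    have h := happ (Set.Iic s) Set.univ U measurableSet_Iic .univ hU
    simp only [Set.mem_Iic, Set.mem_univ, true_and, measure_univ, mul_one] at h
    rw [Measure.real, h, ← integral_toReal hmf.aemeasurable (.of_forall fun z => measure_lt_top _ _)]
    rfl
  have h1 : μ.real {x | x 1 ≤ t ∧ x 2 ∈ U} = ∫ z in U, g z ∂ν := by
    have h := happ Set.univ (Set.Iic t) U .univ measurableSet_Iic hU
    simp only [Set.mem_Iic, Set.mem_univ, true_and, measure_univ, one_mul] at h
    rw [Measure.real, h, ← integral_toReal hmg.aemeasurable (.of_forall fun z => measure_lt_top _ _)]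
    rfl
  have h01 : μ.real {x | x 0 ≤ s ∧ x 1 ≤ t ∧ x 2 ∈ U} = ∫ z in U, f z * g z ∂ν := by
    have h := happ (Set.Iic s) (Set.Iic t) U measurableSet_Iic measurableSet_Iic hU
    simp only [Set.mem_Iic] at h
    have hmfg : Measurable fun z => gaussianReal (C 0 2 * z) v₀ (Set.Iic s) *
      gaussianReal (C 1 2 * z) v₁ (Set.Iic t) := hmf.mul hmg
    rw [Measure.real, h, ← integral_toReal hmfg.aemeasurable
      (.of_forall fun z => ENNReal.mul_lt_top (measure_lt_top _ _) (measure_lt_top _ _))]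
    simp only [ENNReal.toReal_mul]
    rfl
  refine ⟨by rw [h2]; exact measureReal_univ_pos, ?_⟩
  rw [h2, h0, h1, h01]
  refine chebyshev_integral_pos _ (Measure.restrict_le_self.absolutelyContinuous.trans hν)
    hfi hgi hfgi fun z w hzw => ?_
  have h := mul_pos (gaussianReal_real_Iic_sub_mul_pos h13 hv₀ s hzw)
    (gaussianReal_real_Iic_sub_mul_pos h23 hv₁ t hzw)
  refine pos_of_mul_pos_right (a := (w - z) ^ 2) ?_ (sq_nonneg _)
  convert h using 1
  ring

theorem Real.sign_eq_sign_of_mul_pos {x y : ℝ} (h : 0 < x * y) : Real.sign x = Real.sign y := by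
  rcases pos_and_pos_or_neg_and_neg_of_mul_pos h with ⟨hx, hy⟩ | ⟨hx, hy⟩
  · rw [Real.sign_of_pos hx, Real.sign_of_pos hy]
  · rw [Real.sign_of_neg hx, Real.sign_of_neg hy]

/-- for `(Z₁,Z₂,Z₃) ~ N₃(0,C)` with `(C⁻¹)₁₂ = 0`, `c₁₃ ≠ 0`, `c₂₃ ≠ 0`,
and `B = (a, b]` (extended-real endpoints, `a < b`), the sign of
`P(Z₁ ≤ s, Z₂ ≤ t | Z₃ ∈ B) − P(Z₁ ≤ s | Z₃ ∈ B)·P(Z₂ ≤ t | Z₃ ∈ B)` equals the sign of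
`c₁₃ c₂₃`, and in particular is nonzero: `Z₁` and `Z₂` are conditionally dependent given
the discretized event `{Z₃ ∈ B}`, so a zero entry of `C⁻¹` does not imply conditional
independence after discretization. -/
theorem conditional_dependence_after_discretization
    (C : Matrix (Fin 3) (Fin 3) ℝ) (hC : C.PosDef) (hCcorr : ∀ j, C j j = 1)
    (hpartial : C⁻¹ 0 1 = 0) (h13 : C 0 2 ≠ 0) (h23 : C 1 2 ≠ 0)
    {α : Type*} [MeasurableSpace α] (P : Measure α) [IsProbabilityMeasure P]
    (Z : α → Fin 3 → ℝ) (hZmeas : Measurable Z) (hZlaw : P.map Z = gaussianMeasure C)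
    (a b : EReal) (hab : a < b) (s t : ℝ) :
    Real.sign
        ((P {ω | Z ω 0 ≤ s ∧ Z ω 1 ≤ t ∧ a < (Z ω 2 : EReal) ∧ (Z ω 2 : EReal) ≤ b}).toReal /
            (P {ω | a < (Z ω 2 : EReal) ∧ (Z ω 2 : EReal) ≤ b}).toReal -
          (P {ω | Z ω 0 ≤ s ∧ a < (Z ω 2 : EReal) ∧ (Z ω 2 : EReal) ≤ b}).toReal /
              (P {ω | a < (Z ω 2 : EReal) ∧ (Z ω 2 : EReal) ≤ b}).toReal *
            ((P {ω | Z ω 1 ≤ t ∧ a < (Z ω 2 : EReal) ∧ (Z ω 2 : EReal) ≤ b}).toReal /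
              (P {ω | a < (Z ω 2 : EReal) ∧ (Z ω 2 : EReal) ≤ b}).toReal))
      = Real.sign (C 0 2 * C 1 2) ∧
    (P {ω | Z ω 0 ≤ s ∧ Z ω 1 ≤ t ∧ a < (Z ω 2 : EReal) ∧ (Z ω 2 : EReal) ≤ b}).toReal /
          (P {ω | a < (Z ω 2 : EReal) ∧ (Z ω 2 : EReal) ≤ b}).toReal -
        (P {ω | Z ω 0 ≤ s ∧ a < (Z ω 2 : EReal) ∧ (Z ω 2 : EReal) ≤ b}).toReal /
            (P {ω | a < (Z ω 2 : EReal) ∧ (Z ω 2 : EReal) ≤ b}).toReal *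
          ((P {ω | Z ω 1 ≤ t ∧ a < (Z ω 2 : EReal) ∧ (Z ω 2 : EReal) ≤ b}).toReal /
            (P {ω | a < (Z ω 2 : EReal) ∧ (Z ω 2 : EReal) ≤ b}).toReal)
      ≠ 0 := by
  set U : Set ℝ := (fun z : ℝ => (z : EReal)) ⁻¹' Set.Ioc a b
  have hU : MeasurableSet U := measurable_coe_real_ereal measurableSet_Ioc
  have hprob : IsProbabilityMeasure (gaussianMeasure C) :=
    hZlaw ▸ Measure.isProbabilityMeasure_map hZmeas.aemeasurable
  have hmem : ∀ i : Fin 3, ∀ r : ℝ, MeasurableSet {x : Fin 3 → ℝ | x i ≤ r} :=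
    fun i r => measurable_pi_apply i measurableSet_Iic
  have hU2 : MeasurableSet {x : Fin 3 → ℝ | x 2 ∈ U} := measurable_pi_apply 2 hU
  have hlaw : ∀ A : Set (Fin 3 → ℝ), MeasurableSet A →
      (P {ω | Z ω ∈ A}).toReal = (gaussianMeasure C).real A := fun A hA => by
    rw [Measure.real, ← hZlaw, Measure.map_apply hZmeas hA]; rfl
  obtain ⟨hpos, hcov⟩ := gaussian_discretized_covariance_pos C hC (hCcorr 2) hpartial h13 h23 hU
    (EReal.volume_coe_preimage_Ioc_ne_zero hab) s t
  have e2 : (P {ω | a < (Z ω 2 : EReal) ∧ (Z ω 2 : EReal) ≤ b}).toReal = _ := hlaw _ hU2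
  have e0 : (P {ω | Z ω 0 ≤ s ∧ a < (Z ω 2 : EReal) ∧ (Z ω 2 : EReal) ≤ b}).toReal = _ :=
    hlaw _ ((hmem 0 s).inter hU2)
  have e1 : (P {ω | Z ω 1 ≤ t ∧ a < (Z ω 2 : EReal) ∧ (Z ω 2 : EReal) ≤ b}).toReal = _ :=
    hlaw _ ((hmem 1 t).inter hU2)
  have e01 : (P {ω | Z ω 0 ≤ s ∧ Z ω 1 ≤ t ∧ a < (Z ω 2 : EReal) ∧
      (Z ω 2 : EReal) ≤ b}).toReal = _ := hlaw _ ((hmem 0 s).inter ((hmem 1 t).inter hU2))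
  rw [← e2] at hpos
  change 0 < C 0 2 * C 1 2 * ((gaussianMeasure C).real {x | x 2 ∈ U} *
    (gaussianMeasure C).real ({x | x 0 ≤ s} ∩ ({x | x 1 ≤ t} ∩ {x | x 2 ∈ U})) -
      (gaussianMeasure C).real ({x | x 0 ≤ s} ∩ {x | x 2 ∈ U}) *
        (gaussianMeasure C).real ({x | x 1 ≤ t} ∩ {x | x 2 ∈ U})) at hcov
  rw [← e2, ← e0, ← e1, ← e01] at hcov
  have hscale : ∀ p q₀ q₁ q₀₁ : ℝ, p ≠ 0 →
      q₀₁ / p - q₀ / p * (q₁ / p) = (p * q₀₁ - q₀ * q₁) / p ^ 2 := by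
    intro p q₀ q₁ q₀₁ hp
    field_simp
  rw [hscale _ _ _ _ hpos.ne']
  refine (fun h => ⟨Real.sign_eq_sign_of_mul_pos h, left_ne_zero_of_mul h.ne'⟩) ?_
  rw [div_mul_eq_mul_div, mul_comm]
  exact div_pos hcov (pow_pos hpos 2)
end
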